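/- Let N ≥ 3 be an integer, m > 0, and let f : ℝ → ℝ be continuous with f(0) = 0; set F(s) = ∫₀^s f(t) dt. Suppose there exists a C² function u : ℝ^N → [0,∞), not identically zero, satisfying −Δu(x) + m·u(x) = f(u(x)) for all x ∈ ℝ^N and such that |u(x)| + ‖∇u(x)‖ ≤ C·exp(−c‖x‖) for some constants C, c > 0 and all x. Then there exists T > 0 such that (m/2)·T² < F(T). -/

import Mathlib

open MeasureTheory Real

/-- The Laplacian of `u` at `x`: the trace of the second derivative,
computed as the sum of pure second derivatives along the coordinate directions. -/
noncomputable def lap {N : ℕ} (u : EuclideanSpace ℝ (Fin N) → ℝ)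
    (x : EuclideanSpace ℝ (Fin N)) : ℝ :=
  ∑ i, iteratedFDeriv ℝ 2 u x ![EuclideanSpace.single i 1, EuclideanSpace.single i 1]

open Filter Topology Module InnerProductSpace
open scoped Gradient Laplacian

/-! Put `G s = F s - m / 2 * s ^ 2`, so that the equation reads `-Δ u = G' ∘ u`. Multiplying it by
`⟪x, ∇ u⟫`, the infinitesimal dilation of `u`, and integrating by parts gives Pohozaev's identity
`(n / 2 - 1) ∫ ‖∇ u‖ ^ 2 = n ∫ G ∘ u`. If `G ∘ u ≤ 0` and `2 ≤ n`, both sides vanish, hence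
`G ∘ u = 0`. Differentiating this relation, `∇ u = 0` wherever `G' ∘ u ≠ 0`, so `u` is harmonic.
Multiplying `Δ u = 0` by `u` then gives `∫ ‖∇ u‖ ^ 2 = 0`, and an integrable constant is zero. -/

section Divergence

variable {E : Type*} [NormedAddCommGroup E] [NormedSpace ℝ E]

/-- The divergence of a vector field, as the trace of its derivative; it takes a junk value where
the field is not differentiable. -/
noncomputable def divergence (V : E → E) (x : E) : ℝ :=
  LinearMap.trace ℝ E (fderiv ℝ V x)

variable {V W : E → E} {φ : E → ℝ} {x : E}

lemma divergence_add (hV : DifferentiableAt ℝ V x) (hW : DifferentiableAt ℝ W x) :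
    divergence (fun y ↦ V y + W y) x = divergence V x + divergence W x := by
  simp [divergence, fderiv_fun_add hV hW]

variable [FiniteDimensional ℝ E]

lemma divergence_id : divergence (fun y : E ↦ y) x = finrank ℝ E := by
  simp [divergence, LinearMap.trace_id]

lemma divergence_smul (hφ : DifferentiableAt ℝ φ x) (hV : DifferentiableAt ℝ V x) :
    divergence (fun y ↦ φ y • V y) x = φ x * divergence V x + fderiv ℝ φ x (V x) := by
  simp [divergence, fderiv_fun_smul hφ hV, LinearMap.trace_smulRight]

/-- The trace of endomorphisms as a continuous linear form, used to exchange divergence and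
integral. -/
noncomputable def traceCLM (E : Type*) [NormedAddCommGroup E] [NormedSpace ℝ E]
    [FiniteDimensional ℝ E] : (E →L[ℝ] E) →L[ℝ] ℝ :=
  (LinearMap.trace ℝ E ∘ₗ ContinuousLinearMap.coeLM ℝ).toContinuousLinearMap

lemma continuous_divergence (hV : ContDiff ℝ 1 V) : Continuous (divergence V) :=
  (traceCLM E).continuous.comp (hV.continuous_fderiv one_ne_zero)

variable [MeasurableSpace E] [BorelSpace E] {μ : Measure E} [μ.IsAddHaarMeasure]

lemma integral_fderiv_eq_zero {F : Type*} [NormedAddCommGroup F] [NormedSpace ℝ F] [CompleteSpace F]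
    {f : E → F} (hf : Differentiable ℝ f) (hint : Integrable f μ)
    (hint' : Integrable (fderiv ℝ f) μ) : ∫ x, fderiv ℝ f x ∂μ = 0 := by
  ext v
  have hv : Integrable (fun x ↦ fderiv ℝ f x v) μ := hint'.apply_continuousLinearMap v
  have h := integral_smul_fderiv_eq_neg_fderiv_smul_of_integrable (μ := μ) (v := v)
    (f := fun _ ↦ (1 : ℝ)) (g := f) (by simp) (by simpa using hv) (by simpa using hint)
    (by simp) (fun x _ ↦ hf x)
  simpa [ContinuousLinearMap.integral_apply hint'] using h

lemma integral_divergence_eq_zero_of_hasCompactSupport (hV : ContDiff ℝ 1 V)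
    (hsupp : HasCompactSupport V) : ∫ x, divergence V x ∂μ = 0 := by
  have hint' : Integrable (fderiv ℝ V) μ :=
    (hV.continuous_fderiv one_ne_zero).integrable_of_hasCompactSupport (hsupp.fderiv ℝ)
  have hint : Integrable V μ := hV.continuous.integrable_of_hasCompactSupport hsupp
  calc ∫ x, divergence V x ∂μ = traceCLM E (∫ x, fderiv ℝ V x ∂μ) :=
        (traceCLM E).integral_comp_comm hint'
    _ = 0 := by
        rw [integral_fderiv_eq_zero (hV.differentiable one_ne_zero) hint hint', map_zero]

lemma integral_mul_divergence_add_fderiv_apply_eq_zero (hφ : ContDiff ℝ 1 φ)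
    (hsupp : HasCompactSupport φ) (hV : ContDiff ℝ 1 V) :
    ∫ x, (φ x * divergence V x + fderiv ℝ φ x (V x)) ∂μ = 0 := by
  rw [← integral_divergence_eq_zero_of_hasCompactSupport (μ := μ) (hφ.smul hV) hsupp.smul_right]
  congr with x
  exact (divergence_smul (hφ.differentiable one_ne_zero x) (hV.differentiable one_ne_zero x)).symm

theorem integral_divergence_eq_zero (hV : ContDiff ℝ 1 V) (hint : Integrable V μ)
    (hint' : Integrable (divergence V) μ) : ∫ x, divergence V x ∂μ = 0 := by
  let φ : ContDiffBump (0 : E) := ⟨1, 2, one_pos, one_lt_two⟩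
  have hφ : ContDiff ℝ 1 φ := φ.contDiff
  have hφ' : Continuous (fderiv ℝ φ) := hφ.continuous_fderiv one_ne_zero
  obtain ⟨K, hK⟩ : ∃ K, ∀ x, ‖fderiv ℝ φ x‖ ≤ K :=
    (φ.hasCompactSupport.fderiv ℝ).exists_bound_of_continuous hφ'
  have hcutoff : ∀ ε : ℝ, 0 < ε →
      ∫ x, (φ (ε • x) * divergence V x + ε * fderiv ℝ φ (ε • x) (V x)) ∂μ = 0 := by
    intro ε hε
    have hφε : ContDiff ℝ 1 fun x ↦ φ (ε • x) := hφ.comp (contDiff_const_smul ε)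
    simpa [fderiv_comp_smul] using integral_mul_divergence_add_fderiv_apply_eq_zero (μ := μ)
      hφε (φ.hasCompactSupport.comp_smul hε.ne') hV
  have hlim : Tendsto
      (fun ε : ℝ ↦ ∫ x, (φ (ε • x) * divergence V x + ε * fderiv ℝ φ (ε • x) (V x)) ∂μ)
      (𝓝[>] 0) (𝓝 (∫ x, divergence V x ∂μ)) := by
    refine tendsto_integral_filter_of_dominated_convergence
      (fun x ↦ ‖divergence V x‖ + K * ‖V x‖) ?_ ?_ (hint'.norm.add (hint.norm.const_mul K)) ?_
    · refine .of_forall fun ε ↦ Continuous.aestronglyMeasurable ?_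
      have := continuous_divergence hV
      have := hV.continuous
      have := φ.continuous
      fun_prop
    · filter_upwards [Ioc_mem_nhdsGT one_pos] with ε hε
      refine .of_forall fun x ↦ norm_add_le_of_le ?_ ?_
      · rw [norm_mul, norm_of_nonneg φ.nonneg]
        exact mul_le_of_le_one_left (norm_nonneg _) φ.le_one
      · rw [norm_mul, norm_of_nonneg hε.1.le]
        exact (mul_le_of_le_one_left (norm_nonneg _) hε.2).trans
          (ContinuousLinearMap.le_of_opNorm_le _ (hK _) _)
    · refine .of_forall fun x ↦ tendsto_nhdsWithin_of_tendsto_nhds ?_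
      have h : Continuous fun ε : ℝ ↦
          φ (ε • x) * divergence V x + ε * fderiv ℝ φ (ε • x) (V x) := by
        have := φ.continuous
        fun_prop
      simpa [φ.one_of_mem_closedBall (Metric.mem_closedBall_self φ.rIn_pos.le)] using h.tendsto 0
  refine tendsto_nhds_unique hlim (tendsto_const_nhds.congr' ?_)
  filter_upwards [self_mem_nhdsWithin] with ε hε
  exact (hcutoff ε hε).symm

end Divergence

section Gradient

variable {E : Type*} [NormedAddCommGroup E] [InnerProductSpace ℝ E]
  {G : ℝ → ℝ} {u : E → ℝ} {x : E}

section
variable [CompleteSpace E]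

lemma gradient_eq_zero_iff : ∇ u x = 0 ↔ fderiv ℝ u x = 0 := by
  rw [gradient, map_eq_zero_iff _ (toDual ℝ E).symm.injective]

lemma contDiffAt_gradient {n : WithTop ℕ∞} (hu : ContDiffAt ℝ (n + 1) u x) :
    ContDiffAt ℝ n (∇ u) x :=
  (toDual ℝ E).symm.contDiff.contDiffAt.comp x (hu.fderiv_right le_rfl)

lemma contDiff_gradient {n : WithTop ℕ∞} (hu : ContDiff ℝ (n + 1) u) : ContDiff ℝ n (∇ u) :=
  contDiff_iff_contDiffAt.2 fun _ ↦ contDiffAt_gradient hu.contDiffAt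

lemma continuous_gradient (hu : ContDiff ℝ 1 u) : Continuous (∇ u) :=
  (contDiff_gradient (n := 0) (by simpa using hu)).continuous

lemma inner_fderiv_gradient (h : DifferentiableAt ℝ (∇ u) x) (v w : E) :
    ⟪fderiv ℝ (∇ u) x v, w⟫_ℝ = fderiv ℝ (fderiv ℝ u) x v w := by
  have h : HasFDerivAt (fderiv ℝ u)
      ((toDual ℝ E).toContinuousLinearEquiv.toContinuousLinearMap ∘L fderiv ℝ (∇ u) x) x := by
    rw [← toDual_comp_gradient (𝕜 := ℝ)]
    exact (toDual ℝ E).toContinuousLinearEquiv.hasFDerivAt.comp x h.hasFDerivAt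
  rw [h.fderiv]
  simp

lemma inner_fderiv_gradient_comm (hu : ContDiffAt ℝ 2 u x) (v w : E) :
    ⟪fderiv ℝ (∇ u) x v, w⟫_ℝ = ⟪v, fderiv ℝ (∇ u) x w⟫_ℝ := by
  have h := (contDiffAt_gradient hu).differentiableAt one_ne_zero
  rw [← real_inner_comm v, inner_fderiv_gradient h, inner_fderiv_gradient h]
  exact hu.isSymmSndFDerivAt (by simp) v w
end

variable [FiniteDimensional ℝ E]

lemma divergence_gradient (h : DifferentiableAt ℝ (∇ u) x) : divergence (∇ u) x = Δ u x := by
  rw [divergence, LinearMap.trace_eq_sum_inner _ (stdOrthonormalBasis ℝ E),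
    laplacian_eq_iteratedFDeriv_stdOrthonormalBasis]
  simp [iteratedFDeriv_two_apply, ← inner_fderiv_gradient h, real_inner_comm]

/-- The vector field of Pohozaev's identity for `-Δ u = G' ∘ u`. It is the Noether current of the
dilations for the energy density `‖∇ u‖ ^ 2 / 2 - G ∘ u`, up to the term coming from the scaling
weight of `u`. -/
noncomputable def pohozaevField (G : ℝ → ℝ) (u : E → ℝ) (x : E) : E :=
  ⟪x, ∇ u x⟫_ℝ • ∇ u x + (G (u x) - ‖∇ u x‖ ^ 2 / 2) • x

lemma norm_pohozaevField_le :
    ‖pohozaevField G u x‖ ≤ ‖x‖ * (3 / 2 * ‖∇ u x‖ ^ 2 + |G (u x)|) := by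
  have hinner : ‖⟪x, ∇ u x⟫_ℝ • ∇ u x‖ ≤ ‖x‖ * ‖∇ u x‖ * ‖∇ u x‖ := by
    rw [norm_smul]
    gcongr
    exact norm_inner_le_norm _ _
  have hradial : ‖(G (u x) - ‖∇ u x‖ ^ 2 / 2) • x‖ ≤ (|G (u x)| + ‖∇ u x‖ ^ 2 / 2) * ‖x‖ := by
    rw [norm_smul]
    gcongr
    exact (abs_sub _ _).trans_eq (by rw [abs_of_nonneg (by positivity : 0 ≤ ‖∇ u x‖ ^ 2 / 2)])
  calc ‖pohozaevField G u x‖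
    _ ≤ ‖x‖ * ‖∇ u x‖ * ‖∇ u x‖ + (|G (u x)| + ‖∇ u x‖ ^ 2 / 2) * ‖x‖ :=
      norm_add_le_of_le hinner hradial
    _ = ‖x‖ * (3 / 2 * ‖∇ u x‖ ^ 2 + |G (u x)|) := by ring

lemma contDiff_pohozaevField (hG : ContDiff ℝ 1 G) (hu : ContDiff ℝ 2 u) :
    ContDiff ℝ 1 (pohozaevField G u) := by
  have hgrad : ContDiff ℝ 1 (∇ u) := contDiff_gradient hu
  have hGu : ContDiff ℝ 1 fun x ↦ G (u x) := hG.comp (hu.of_le one_le_two)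
  exact ((contDiff_id.inner ℝ hgrad).smul hgrad).add
    ((hGu.sub ((hgrad.norm_sq ℝ).div_const 2)).smul contDiff_id)

lemma fderiv_inner_self_gradient_apply (hu : ContDiffAt ℝ 2 u x) :
    fderiv ℝ (fun y ↦ ⟪y, ∇ u y⟫_ℝ) x (∇ u x) =
      ⟪x, fderiv ℝ (∇ u) x (∇ u x)⟫_ℝ + ‖∇ u x‖ ^ 2 := by
  have hgrad := (contDiffAt_gradient hu).differentiableAt one_ne_zero
  simpa using fderiv_inner_apply ℝ differentiableAt_id hgrad (∇ u x)

lemma hasFDerivAt_comp_sub_norm_gradient_sq (hG : DifferentiableAt ℝ G (u x))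
    (hu : ContDiffAt ℝ 2 u x) :
    HasFDerivAt (fun y ↦ G (u y) - ‖∇ u y‖ ^ 2 / 2)
      (deriv G (u x) • fderiv ℝ u x - innerSL ℝ (∇ u x) ∘L fderiv ℝ (∇ u) x) x := by
  have hgrad := (contDiffAt_gradient hu).differentiableAt one_ne_zero
  have hsq : HasFDerivAt (fun y ↦ ‖∇ u y‖ ^ 2 / 2) (innerSL ℝ (∇ u x) ∘L fderiv ℝ (∇ u) x) x := by
    convert! hgrad.hasFDerivAt.norm_sq.mul_const (2⁻¹ : ℝ) using 1
    ext; simp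
  exact (hG.hasDerivAt.comp_hasFDerivAt x
    (hu.differentiableAt two_ne_zero).hasFDerivAt).fun_sub hsq

-- The two second-order terms `⟪x, D²u ∇u⟫` cancel because the Hessian is symmetric.
lemma divergence_pohozaevField (hG : DifferentiableAt ℝ G (u x)) (hu : ContDiffAt ℝ 2 u x) :
    divergence (pohozaevField G u) x =
      (1 - finrank ℝ E / 2) * ‖∇ u x‖ ^ 2 + finrank ℝ E * G (u x)
        + ⟪x, ∇ u x⟫_ℝ * (Δ u x + deriv G (u x)) := by
  have hgrad := (contDiffAt_gradient hu).differentiableAt one_ne_zero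
  have hinner : DifferentiableAt ℝ (fun y ↦ ⟪y, ∇ u y⟫_ℝ) x := differentiableAt_id.inner ℝ hgrad
  have hcoef := hasFDerivAt_comp_sub_norm_gradient_sq hG hu
  have hcoef_apply : fderiv ℝ (fun y ↦ G (u y) - ‖∇ u y‖ ^ 2 / 2) x x =
      deriv G (u x) * ⟪x, ∇ u x⟫_ℝ - ⟪x, fderiv ℝ (∇ u) x (∇ u x)⟫_ℝ := by
    rw [hcoef.fderiv, ← inner_fderiv_gradient_comm hu, real_inner_comm (∇ u x) x,
      real_inner_comm (∇ u x) (fderiv ℝ (∇ u) x x), inner_gradient_left]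
    simp
  calc divergence (pohozaevField G u) x
    _ = (⟪x, ∇ u x⟫_ℝ * Δ u x + fderiv ℝ (fun y ↦ ⟪y, ∇ u y⟫_ℝ) x (∇ u x))
        + ((G (u x) - ‖∇ u x‖ ^ 2 / 2) * finrank ℝ E
          + fderiv ℝ (fun y ↦ G (u y) - ‖∇ u y‖ ^ 2 / 2) x x) := by
      rw [← divergence_gradient hgrad, ← divergence_smul hinner hgrad, ← divergence_id (x := x),
        ← divergence_smul hcoef.differentiableAt differentiableAt_fun_id]
      exact divergence_add (hinner.smul hgrad) (hcoef.differentiableAt.smul differentiableAt_id)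
    _ = _ := by
      rw [fderiv_inner_self_gradient_apply hu, hcoef_apply]
      ring

lemma laplacian_eq_zero_of_comp_eq_zero (hG : ContDiff ℝ 1 G) (hu : ContDiff ℝ 2 u)
    (heq : ∀ x, -Δ u x = deriv G (u x)) (hGu : ∀ x, G (u x) = 0) (x : E) : Δ u x = 0 := by
  by_contra hx
  have hderiv : ∀ᶠ y in 𝓝 x, deriv G (u y) ≠ 0 :=
    ((hG.continuous_deriv le_rfl).comp hu.continuous).continuousAt.eventually_ne
      (by simpa [← heq x] using hx)
  have hgrad : ∇ u =ᶠ[𝓝 x] 0 := by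
    filter_upwards [hderiv] with y hy
    have hchain := (hG.differentiable one_ne_zero (u y)).hasDerivAt.comp_hasFDerivAt y
      (hu.differentiable two_ne_zero y).hasFDerivAt
    have hconst : G ∘ u = fun _ ↦ 0 := funext hGu
    rw [hconst] at hchain
    have := hchain.unique (hasFDerivAt_const 0 y)
    exact gradient_eq_zero_iff.2 ((smul_eq_zero.1 this).resolve_left hy)
  refine hx ?_
  rw [← divergence_gradient ((contDiff_gradient hu).differentiable one_ne_zero x), divergence,
    hgrad.fderiv_eq]
  simp

end Gradient

section Integrability

variable {E : Type*} [NormedAddCommGroup E] [MeasurableSpace E] [BorelSpace E] {μ : Measure E}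

lemma integrable_of_one_add_norm_mul {f : E → ℝ}
    (hf : Integrable (fun x ↦ (1 + ‖x‖) * f x) μ) : Integrable f μ := by
  have hpos (x : E) : 0 < 1 + ‖x‖ := by positivity
  refine (hf.bdd_mul (c := 1) (f := fun x ↦ (1 + ‖x‖)⁻¹)
    (Measurable.aestronglyMeasurable (by fun_prop)) (.of_forall fun x ↦ ?_)).congr
    (.of_forall fun x ↦ inv_mul_cancel_left₀ (hpos x).ne' _)
  rw [norm_inv, norm_of_nonneg (hpos x).le]
  exact inv_le_one_of_one_le₀ (by simp)

lemma exists_abs_le_mul_abs {G : ℝ → ℝ} (hG : ContDiff ℝ 1 G) (hG0 : G 0 = 0) (M : ℝ) :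
    ∃ L, ∀ s, |s| ≤ M → |G s| ≤ L * |s| := by
  obtain ⟨L, hL⟩ := (isCompact_Icc (a := -M) (b := M)).exists_bound_of_continuousOn
    (hG.continuous_deriv le_rfl).continuousOn
  refine ⟨L, fun s hs ↦ ?_⟩
  have h0 : (0 : ℝ) ∈ Set.Icc (-M) M := by simpa using (abs_nonneg s).trans hs
  simpa [hG0] using (convex_Icc (-M) M).norm_image_sub_le_of_norm_deriv_le
    (fun t _ ↦ hG.differentiable one_ne_zero t) hL h0 (abs_le.1 hs)

lemma integrable_one_add_norm_mul_comp {G : ℝ → ℝ} {u : E → ℝ} {M : ℝ} (hG : ContDiff ℝ 1 G)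
    (hG0 : G 0 = 0) (hu : Continuous u) (hbdd : ∀ x, |u x| ≤ M)
    (hint : Integrable (fun x ↦ (1 + ‖x‖) * u x) μ) :
    Integrable (fun x ↦ (1 + ‖x‖) * G (u x)) μ := by
  obtain ⟨L, hL⟩ := exists_abs_le_mul_abs hG hG0 M
  have hcont : Continuous fun x ↦ (1 + ‖x‖) * G (u x) := by
    have := hG.continuous
    fun_prop
  refine (hint.norm.const_mul L).mono' hcont.aestronglyMeasurable (.of_forall fun x ↦ ?_)
  calc ‖(1 + ‖x‖) * G (u x)‖ = ‖1 + ‖x‖‖ * |G (u x)| := norm_mul _ _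
    _ ≤ ‖1 + ‖x‖‖ * (L * |u x|) := by gcongr; exact hL _ (hbdd x)
    _ = L * ‖(1 + ‖x‖) * u x‖ := by rw [norm_mul, norm_eq_abs (u x)]; ring

lemma eq_zero_of_integral_eq_zero {X : Type*} [TopologicalSpace X] [MeasurableSpace X]
    {μ : Measure X} [μ.IsOpenPosMeasure] {f : X → ℝ} (hf : Continuous f) (hnonneg : 0 ≤ f)
    (hint : Integrable f μ) (hzero : ∫ x, f x ∂μ = 0) : f = 0 :=
  (hf.ae_eq_iff_eq μ continuous_zero).1 ((integral_eq_zero_iff_of_nonneg hnonneg hint).1 hzero)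

variable [NormedSpace ℝ E] [FiniteDimensional ℝ E] [μ.IsAddHaarMeasure]

lemma integrable_one_add_norm_rpow_mul_exp_neg_mul_norm {c : ℝ} (hc : 0 < c) (b : ℝ) :
    Integrable (fun x : E ↦ (1 + ‖x‖) ^ b * exp (-c * ‖x‖)) μ := by
  have hpos (x : E) : 0 < 1 + ‖x‖ := by positivity
  set r : ℝ := finrank ℝ E + 1
  have htop : Tendsto (fun x : E ↦ 1 + ‖x‖) (cocompact E) atTop :=
    tendsto_atTop_add_const_left _ 1 tendsto_norm_cocompact_atTop
  have hexp : (fun x : E ↦ exp (-c * (1 + ‖x‖))) =O[cocompact E] fun x ↦ (1 + ‖x‖) ^ (-r - b) :=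
    ((isLittleO_exp_neg_mul_rpow_atTop hc (-r - b)).comp_tendsto htop).isBigO
  have hprod : (fun x : E ↦ (1 + ‖x‖) ^ b * exp (-c * ‖x‖))
      =O[cocompact E] fun x ↦ (1 + ‖x‖) ^ (-r) := by
    convert! ((Asymptotics.isBigO_refl (fun x : E ↦ (1 + ‖x‖) ^ b) _).mul hexp).const_mul_left
      (exp c) using 2 with x x
    · rw [show -c * ‖x‖ = c + -c * (1 + ‖x‖) by ring, exp_add]
      ring
    · rw [← rpow_add (hpos x)]
      ring_nf
  have hcont : Continuous fun x : E ↦ (1 + ‖x‖) ^ b * exp (-c * ‖x‖) :=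
    ((continuous_const.add continuous_norm).rpow_const fun x ↦ .inl (hpos x).ne').mul
      (by fun_prop)
  exact hcont.locallyIntegrable.integrable_of_isBigO_cocompact hprod
    ((integrable_one_add_norm (lt_add_one _)).integrableAtFilter _)

lemma integrable_one_add_norm_mul_of_abs_le_exp {v : E → ℝ} {C c : ℝ} (hv : Continuous v)
    (hc : 0 < c) (hle : ∀ x, |v x| ≤ C * exp (-c * ‖x‖)) :
    Integrable (fun x ↦ (1 + ‖x‖) * v x) μ := by
  refine ((integrable_one_add_norm_rpow_mul_exp_neg_mul_norm hc 1).const_mul C).mono'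
    (by fun_prop) (.of_forall fun x ↦ ?_)
  have hpos : 0 < 1 + ‖x‖ := by positivity
  calc ‖(1 + ‖x‖) * v x‖
    _ = (1 + ‖x‖) * |v x| := by rw [norm_mul, norm_of_nonneg hpos.le, norm_eq_abs]
    _ ≤ (1 + ‖x‖) * (C * exp (-c * ‖x‖)) := by gcongr; exact hle x
    _ = C * ((1 + ‖x‖) ^ (1 : ℝ) * exp (-c * ‖x‖)) := by rw [rpow_one]; ring

end Integrability

section SemilinearEquation

variable {E : Type*} [NormedAddCommGroup E] [InnerProductSpace ℝ E] [FiniteDimensional ℝ E]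
  [MeasurableSpace E] [BorelSpace E] {μ : Measure E} {u : E → ℝ} {G : ℝ → ℝ}

lemma integrable_smul_gradient {M : ℝ} (hu : ContDiff ℝ 1 u) (hbdd : ∀ x, |u x| ≤ M)
    (hint : Integrable u μ) (hgrad : Integrable (fun x ↦ ‖∇ u x‖ ^ 2) μ) :
    Integrable (fun x ↦ u x • ∇ u x) μ := by
  refine ((hint.norm.const_mul M).add hgrad).mono'
    (hu.continuous.smul (continuous_gradient hu)).aestronglyMeasurable (.of_forall fun x ↦ ?_)
  calc ‖u x • ∇ u x‖ = |u x| * ‖∇ u x‖ := norm_smul _ _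
    _ ≤ |u x| * |u x| + ‖∇ u x‖ ^ 2 := by
      nlinarith [sq_nonneg (|u x| - ‖∇ u x‖), sq_nonneg (|u x|), sq_nonneg ‖∇ u x‖]
    _ ≤ M * |u x| + ‖∇ u x‖ ^ 2 := by gcongr; exact hbdd x

variable [μ.IsAddHaarMeasure]

theorem pohozaev_identity (hG : ContDiff ℝ 1 G) (hu : ContDiff ℝ 2 u)
    (heq : ∀ x, -Δ u x = deriv G (u x))
    (hgrad : Integrable (fun x ↦ (1 + ‖x‖) * ‖∇ u x‖ ^ 2) μ)
    (hGu : Integrable (fun x ↦ (1 + ‖x‖) * G (u x)) μ) :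
    (finrank ℝ E / 2 - 1) * ∫ x, ‖∇ u x‖ ^ 2 ∂μ = finrank ℝ E * ∫ x, G (u x) ∂μ := by
  have hgrad' := (integrable_of_one_add_norm_mul hgrad).const_mul (1 - finrank ℝ E / 2 : ℝ)
  have hGu' := (integrable_of_one_add_norm_mul hGu).const_mul (finrank ℝ E : ℝ)
  have hdiv : divergence (pohozaevField G u) =
      fun x ↦ (1 - finrank ℝ E / 2) * ‖∇ u x‖ ^ 2 + finrank ℝ E * G (u x) := by
    ext x
    rw [divergence_pohozaevField (hG.differentiable one_ne_zero _) hu.contDiffAt, ← heq x]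
    ring
  have hfield : Integrable (pohozaevField G u) μ := by
    refine ((hgrad.const_mul (3 / 2)).add hGu.norm).mono'
      (contDiff_pohozaevField hG hu).continuous.aestronglyMeasurable (.of_forall fun x ↦ ?_)
    calc ‖pohozaevField G u x‖ ≤ ‖x‖ * (3 / 2 * ‖∇ u x‖ ^ 2 + |G (u x)|) := norm_pohozaevField_le
      _ ≤ (1 + ‖x‖) * (3 / 2 * ‖∇ u x‖ ^ 2 + |G (u x)|) := by gcongr; linarith
      _ = 3 / 2 * ((1 + ‖x‖) * ‖∇ u x‖ ^ 2) + ‖(1 + ‖x‖) * G (u x)‖ := by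
        rw [norm_mul, norm_of_nonneg (by positivity : 0 ≤ 1 + ‖x‖), norm_eq_abs]
        ring
  have hzero := integral_divergence_eq_zero (contDiff_pohozaevField hG hu) hfield
    (hdiv ▸ hgrad'.add hGu')
  rw [hdiv, integral_add hgrad' hGu', integral_const_mul, integral_const_mul] at hzero
  linarith

lemma gradient_eq_zero_of_laplacian_eq_zero (hu : ContDiff ℝ 2 u) (hharm : ∀ x, Δ u x = 0)
    (hint : Integrable (fun x ↦ u x • ∇ u x) μ) (hgrad : Integrable (fun x ↦ ‖∇ u x‖ ^ 2) μ)
    (x : E) : ∇ u x = 0 := by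
  have hgradC : ContDiff ℝ 1 (∇ u) := contDiff_gradient hu
  have hdiv : divergence (fun x ↦ u x • ∇ u x) = fun x ↦ ‖∇ u x‖ ^ 2 := by
    ext x
    have hgradD := hgradC.differentiable one_ne_zero x
    rw [divergence_smul (hu.differentiable two_ne_zero x) hgradD, divergence_gradient hgradD,
      hharm, ← inner_gradient_left, real_inner_self_eq_norm_sq, mul_zero, zero_add]
  have hzero := integral_divergence_eq_zero ((hu.of_le one_le_two).smul hgradC) hint
    (hdiv ▸ hgrad)
  have hsq := eq_zero_of_integral_eq_zero (hgradC.continuous.norm.pow 2)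
    (fun x ↦ sq_nonneg _) hgrad (hdiv ▸ hzero)
  simpa using congrFun hsq x

theorem gradient_eq_zero_of_comp_nonpos (hE : 2 ≤ finrank ℝ E) (hG : ContDiff ℝ 1 G)
    (hu : ContDiff ℝ 2 u) (heq : ∀ x, -Δ u x = deriv G (u x)) (hnonpos : ∀ x, G (u x) ≤ 0)
    (hgrad : Integrable (fun x ↦ (1 + ‖x‖) * ‖∇ u x‖ ^ 2) μ)
    (hGu : Integrable (fun x ↦ (1 + ‖x‖) * G (u x)) μ)
    (hugrad : Integrable (fun x ↦ u x • ∇ u x) μ) (x : E) : ∇ u x = 0 := by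
  have hE' : (2 : ℝ) ≤ finrank ℝ E := mod_cast hE
  have hGu' : Integrable (fun x ↦ -G (u x)) μ := (integrable_of_one_add_norm_mul hGu).neg
  have henergy : 0 ≤ (finrank ℝ E / 2 - 1) * ∫ x, ‖∇ u x‖ ^ 2 ∂μ :=
    mul_nonneg (by linarith) (integral_nonneg fun x ↦ by positivity)
  have hpotential : ∫ x, -G (u x) ∂μ = 0 := by
    refine le_antisymm ?_ (integral_nonneg fun x ↦ neg_nonneg.2 (hnonpos x))
    rw [pohozaev_identity hG hu heq hgrad hGu] at henergy
    rw [integral_neg, neg_nonpos]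
    exact nonneg_of_mul_nonneg_right henergy (by linarith)
  have hG_zero := eq_zero_of_integral_eq_zero (hG.continuous.comp hu.continuous).neg
    (fun x ↦ neg_nonneg.2 (hnonpos x)) hGu' hpotential
  exact gradient_eq_zero_of_laplacian_eq_zero hu
    (laplacian_eq_zero_of_comp_eq_zero hG hu heq fun x ↦ neg_eq_zero.1 (congrFun hG_zero x))
    hugrad (integrable_of_one_add_norm_mul hgrad) x

lemma eq_zero_of_gradient_eq_zero [Nontrivial E] (hu : Differentiable ℝ u)
    (hgrad : ∀ x, ∇ u x = 0) (hint : Integrable u μ) (x : E) : u x = 0 := by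
  have hconst : u = fun _ ↦ u x :=
    funext fun y ↦ is_const_of_fderiv_eq_zero hu (fun z ↦ gradient_eq_zero_iff.1 (hgrad z)) y x
  have := NormedSpace.noncompactSpace ℝ E
  rw [hconst, integrable_const_iff, isFiniteMeasure_iff, measure_univ_of_isAddLeftInvariant] at hint
  simpa using hint

theorem exists_comp_pos (hE : 2 ≤ finrank ℝ E) (hG : ContDiff ℝ 1 G) (hG0 : G 0 = 0)
    (hu : ContDiff ℝ 2 u) (hune : ∃ x, u x ≠ 0) (heq : ∀ x, -Δ u x = deriv G (u x))
    (hbdd : ∃ M, ∀ x, |u x| ≤ M) (hint : Integrable (fun x ↦ (1 + ‖x‖) * u x) μ)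
    (hgrad : Integrable (fun x ↦ (1 + ‖x‖) * ‖∇ u x‖ ^ 2) μ) : ∃ x, 0 < G (u x) := by
  by_contra! hnonpos
  obtain ⟨x, hx⟩ := hune
  obtain ⟨M, hM⟩ := hbdd
  have : Nontrivial E := nontrivial_of_finrank_pos (R := ℝ) (by lia)
  have hint' := integrable_of_one_add_norm_mul hint
  have hugrad := integrable_smul_gradient (hu.of_le one_le_two) hM hint'
    (integrable_of_one_add_norm_mul hgrad)
  have hGu := integrable_one_add_norm_mul_comp hG hG0 hu.continuous hM hint
  exact hx (eq_zero_of_gradient_eq_zero (hu.differentiable two_ne_zero)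
    (gradient_eq_zero_of_comp_nonpos hE hG hu heq hnonpos hgrad hGu hugrad) hint' x)

lemma bounded_and_integrable_of_exponential_decay {C c : ℝ} (hu : ContDiff ℝ 1 u) (hc : 0 < c)
    (hdecay : ∀ x, |u x| + ‖∇ u x‖ ≤ C * exp (-c * ‖x‖)) :
    (∃ M, ∀ x, |u x| ≤ M) ∧ Integrable (fun x ↦ (1 + ‖x‖) * u x) μ ∧
      Integrable (fun x ↦ (1 + ‖x‖) * ‖∇ u x‖ ^ 2) μ := by
  have hu_le (x : E) : |u x| ≤ C * exp (-c * ‖x‖) :=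
    (le_add_of_nonneg_right (norm_nonneg _)).trans (hdecay x)
  have hgrad_le (x : E) : ‖∇ u x‖ ≤ C * exp (-c * ‖x‖) :=
    (le_add_of_nonneg_left (abs_nonneg _)).trans (hdecay x)
  have hC : 0 ≤ C := by simpa using (abs_nonneg _).trans (hu_le 0)
  refine ⟨⟨C, fun x ↦ (hu_le x).trans (mul_le_of_le_one_right hC ?_)⟩,
    integrable_one_add_norm_mul_of_abs_le_exp hu.continuous hc hu_le,
    integrable_one_add_norm_mul_of_abs_le_exp (C := C ^ 2) (c := 2 * c)
      ((continuous_gradient hu).norm.pow 2) (by positivity) fun x ↦ ?_⟩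
  · exact exp_le_one_iff.2 (by nlinarith [norm_nonneg x])
  · calc |‖∇ u x‖ ^ 2| = ‖∇ u x‖ ^ 2 := abs_of_nonneg (sq_nonneg _)
      _ ≤ (C * exp (-c * ‖x‖)) ^ 2 := by gcongr; exact hgrad_le x
      _ = C ^ 2 * exp (-(2 * c) * ‖x‖) := by
        rw [mul_pow, ← exp_nat_mul]
        push_cast
        ring_nf

end SemilinearEquation

lemma hasDerivAt_integral_sub_sq {f : ℝ → ℝ} (hf : Continuous f) (m s : ℝ) :
    HasDerivAt (fun s ↦ (∫ t in (0 : ℝ)..s, f t) - m / 2 * s ^ 2) (f s - m * s) s := by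
  convert! (hf.integral_hasStrictDerivAt 0 s).hasDerivAt.fun_sub
    ((hasDerivAt_pow 2 s).const_mul (m / 2)) using 1
  ring

lemma lap_eq_laplacian {N : ℕ} (u : EuclideanSpace ℝ (Fin N) → ℝ) : lap u = Δ u := by
  ext x
  simp [lap, laplacian_eq_iteratedFDeriv_orthonormalBasis u (EuclideanSpace.basisFun (Fin N) ℝ)]

theorem berestycki_lions_necessary_general {E : Type*} [NormedAddCommGroup E]
    [InnerProductSpace ℝ E] [FiniteDimensional ℝ E] [MeasurableSpace E] [BorelSpace E]
    (μ : Measure E) [μ.IsAddHaarMeasure] (hE : 2 ≤ finrank ℝ E) (m : ℝ)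
    (f : ℝ → ℝ) (hf : Continuous f) (F : ℝ → ℝ) (hF : ∀ s : ℝ, F s = ∫ t in (0 : ℝ)..s, f t)
    (u : E → ℝ) (hu : ContDiff ℝ 2 u) (hune : ∃ x, u x ≠ 0)
    (heq : ∀ x, -Δ u x + m * u x = f (u x)) (hbdd : ∃ M, ∀ x, |u x| ≤ M)
    (hint : Integrable (fun x ↦ (1 + ‖x‖) * u x) μ)
    (hgrad : Integrable (fun x ↦ (1 + ‖x‖) * ‖∇ u x‖ ^ 2) μ) :
    ∃ x, m / 2 * u x ^ 2 < F (u x) := by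
  let G (s : ℝ) : ℝ := (∫ t in (0 : ℝ)..s, f t) - m / 2 * s ^ 2
  have hderiv : deriv G = fun s ↦ f s - m * s :=
    funext fun s ↦ (hasDerivAt_integral_sub_sq hf m s).deriv
  have hG : ContDiff ℝ 1 G := contDiff_one_iff_deriv.2
    ⟨fun s ↦ (hasDerivAt_integral_sub_sq hf m s).differentiableAt, by rw [hderiv]; fun_prop⟩
  obtain ⟨x, hx⟩ := exists_comp_pos hE hG (by simp [G]) hu hune
    (fun x ↦ by rw [hderiv]; linear_combination heq x) hbdd hint hgrad
  exact ⟨x, by rw [hF]; exact sub_pos.1 hx⟩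

theorem berestycki_lions_necessary {N : ℕ} (hN : 3 ≤ N) (m : ℝ) (hm : 0 < m)
    (f : ℝ → ℝ) (hf : Continuous f) (hf0 : f 0 = 0)
    (F : ℝ → ℝ) (hF : ∀ s : ℝ, F s = ∫ t in (0:ℝ)..s, f t)
    (u : EuclideanSpace ℝ (Fin N) → ℝ) (hu : ContDiff ℝ 2 u)
    (hunonneg : ∀ x, 0 ≤ u x) (hune : ∃ x, u x ≠ 0)
    (heq : ∀ x, -lap u x + m * u x = f (u x))
    (C c : ℝ) (hC : 0 < C) (hc : 0 < c)
    (hdecay : ∀ x, |u x| + ‖gradient u x‖ ≤ C * Real.exp (-c * ‖x‖)) :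
    ∃ T > 0, m / 2 * T ^ 2 < F T := by
  obtain ⟨hbdd, hint, hgrad⟩ :=
    bounded_and_integrable_of_exponential_decay (μ := volume) (hu.of_le one_le_two) hc
      hdecay
  obtain ⟨x, hx⟩ := berestycki_lions_necessary_general volume (by simp; lia) m f hf F hF u hu hune
    (lap_eq_laplacian u ▸ heq) hbdd hint hgrad
  exact ⟨u x, (hunonneg x).lt_of_ne' (by intro h; simp [h, hF] at hx), hx⟩
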